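/- arXiv:cs/0102025 — 2 statements merged into one kernel-verified Lean document; each statement's English description precedes it below -/
import Mathlib

section
/- For every LO program P and all sets of facts I, J: if I ≃ J (i.e., den(I) = den(J)) then S_P(I) ≃ S_P(J); hence S_P is well defined on equivalence classes of interpretations modulo ≃. -/
/-- LO goals over a signature `σ`: atoms, ⊤, ⅋ (par) and & (with). -/
inductive Goal (σ : Type) : Type
  | atom : σ → Goal σ
  | top : Goal σ
  | par : Goal σ → Goal σ → Goal σ
  | wth : Goal σ → Goal σ → Goal σ
  deriving DecidableEq

variable {σ : Type} [DecidableEq σ] [Fintype σ]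

/-- A fact: a finite multiset over the signature. -/
abbrev LOFact (σ : Type) := Multiset σ

/-- A context: a finite multiset of goals. -/
abbrev Ctx (σ : Type) := Multiset (Goal σ)

/-- An LO program: a finite set of clauses `H ⊸ G`, a clause being represented by
the multiset ⟨H⟩ of atoms of its head together with its body goal. -/
abbrev LOProgram (σ : Type) := Finset (Multiset σ × Goal σ)

/-- LO provability `P ⇒ Δ`. -/
inductive LOProv (P : LOProgram σ) : Ctx σ → Prop
  | topR (Δ : Ctx σ) : LOProv P (Goal.top ::ₘ Δ)
  | parR (G₁ G₂ : Goal σ) (Δ : Ctx σ) :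
      LOProv P (G₁ ::ₘ G₂ ::ₘ Δ) → LOProv P (Goal.par G₁ G₂ ::ₘ Δ)
  | wthR (G₁ G₂ : Goal σ) (Δ : Ctx σ) :
      LOProv P (G₁ ::ₘ Δ) → LOProv P (G₂ ::ₘ Δ) → LOProv P (Goal.wth G₁ G₂ ::ₘ Δ)
  | bc (H : Multiset σ) (G : Goal σ) (A : LOFact σ) :
      (H, G) ∈ P → LOProv P (G ::ₘ A.map Goal.atom) →
      LOProv P (H.map Goal.atom + A.map Goal.atom)

/-- The denotation (upward closure) of a set of facts. -/
def den (I : Set (LOFact σ)) : Set (LOFact σ) := { B : LOFact σ | ∃ A ∈ I, A ≤ B }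

/-- The symbolic satisfiability judgment `I ⊩ Δ[A]`
(`B - A` is multiset difference, `A₁ ∪ A₂` is the multiset least upper bound). -/
inductive SSat (I : Set (LOFact σ)) : Ctx σ → LOFact σ → Prop
  | top (Δ : Ctx σ) : SSat I (Goal.top ::ₘ Δ) 0
  | fact (A B : LOFact σ) : B ∈ I → SSat I (A.map Goal.atom) (B - A)
  | par (G₁ G₂ : Goal σ) (Δ : Ctx σ) (A : LOFact σ) :
      SSat I (G₁ ::ₘ G₂ ::ₘ Δ) A → SSat I (Goal.par G₁ G₂ ::ₘ Δ) A
  | wth (G₁ G₂ : Goal σ) (Δ : Ctx σ) (A₁ A₂ : LOFact σ) :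
      SSat I (G₁ ::ₘ Δ) A₁ → SSat I (G₂ ::ₘ Δ) A₂ →
      SSat I (Goal.wth G₁ G₂ ::ₘ Δ) (A₁ ∪ A₂)

/-- The symbolic fixpoint operator `S_P`. -/
def SP (P : LOProgram σ) (I : Set (LOFact σ)) : Set (LOFact σ) :=
  { M | ∃ H G A, (H, G) ∈ P ∧ SSat I ({G} : Ctx σ) A ∧ M = H + A }

/-!
Every rule of the symbolic judgment is monotone in its output fact: `B ↦ B - A` and
`(A₁, A₂) ↦ A₁ ∪ A₂` preserve `≤`. Hence, if every fact of `I` lies above a fact of `J`, replacing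
the facts of `I` used in a derivation by smaller facts of `J` can only shrink the output, so what
`I` computes lies in the upward closure of what `J` computes.
-/

section Den

omit [DecidableEq σ] [Fintype σ]

theorem subset_den (I : Set (LOFact σ)) : I ⊆ den I :=
  subset_upperClosure

theorem isUpperSet_den (I : Set (LOFact σ)) : IsUpperSet (den I) :=
  (upperClosure I).upper

theorem den_subset_den_iff {I J : Set (LOFact σ)} : den I ⊆ den J ↔ I ⊆ den J :=
  ⟨(subset_den I).trans, fun hIJ ↦ upperClosure_min hIJ (isUpperSet_den J)⟩

end Den

section Monotonicity

omit [Fintype σ]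

theorem SSat.mem_den {I J : Set (LOFact σ)} (hIJ : I ⊆ den J) {Δ : Ctx σ} {A : LOFact σ}
    (hA : SSat I Δ A) : A ∈ den {A' | SSat J Δ A'} := by
  induction hA with
  | top Δ => exact subset_den _ (SSat.top Δ)
  | fact A B hB =>
    obtain ⟨C, hC, hCB⟩ := hIJ hB
    exact ⟨C - A, SSat.fact A C hC, tsub_le_tsub_right hCB A⟩
  | par G₁ G₂ Δ A _ ih =>
    obtain ⟨A', hA', hle⟩ := ih
    exact ⟨A', SSat.par G₁ G₂ Δ A' hA', hle⟩
  | wth G₁ G₂ Δ A₁ A₂ _ _ ih₁ ih₂ =>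
    obtain ⟨A₁', hA₁', hle₁⟩ := ih₁
    obtain ⟨A₂', hA₂', hle₂⟩ := ih₂
    exact ⟨A₁' ∪ A₂', SSat.wth G₁ G₂ Δ A₁' A₂' hA₁' hA₂', sup_le_sup hle₁ hle₂⟩

theorem SP_subset_den_SP (P : LOProgram σ) {I J : Set (LOFact σ)} (hIJ : I ⊆ den J) :
    SP P I ⊆ den (SP P J) := by
  rintro _ ⟨H, G, A, hP, hA, rfl⟩
  obtain ⟨A', hA', hle⟩ := hA.mem_den hIJ
  exact ⟨H + A', ⟨H, G, A', hP, hA', rfl⟩, add_le_add_right hle H⟩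

theorem den_SP_mono (P : LOProgram σ) {I J : Set (LOFact σ)} (hIJ : den I ⊆ den J) :
    den (SP P I) ⊆ den (SP P J) :=
  den_subset_den_iff.2 (SP_subset_den_SP P (den_subset_den_iff.1 hIJ))

theorem SP_well_defined_general (P : LOProgram σ) (I J : Set (LOFact σ))
    (h : den I = den J) : den (SP P I) = den (SP P J) :=
  (den_SP_mono P h.subset).antisymm (den_SP_mono P h.superset)

end Monotonicity

/-- `S_P` is well defined modulo the equivalence `I ≃ J ↔ den(I) = den(J)`. -/
theorem SP_well_defined (P : LOProgram σ) (I J : Set (LOFact σ))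
    (h : den I = den J) : den (SP P I) = den (SP P J) :=
  SP_well_defined_general P I J h
end

section
/- For every LO program P, the denotation of the least fixpoint of the symbolic operator S_P equals the least fixpoint of the ground operator T_P: writing S_P↑ω = ⋃_{k≥0} S_P^k(∅), one has den(S_P↑ω) = lfp(T_P). -/
variable {σ : Type} [DecidableEq σ] [Fintype σ]

/-- The satisfiability judgment `I ⊨ Δ[A]`. -/
inductive Sat (I : Set (LOFact σ)) : Ctx σ → LOFact σ → Prop
  | top (Δ : Ctx σ) (A : LOFact σ) : Sat I (Goal.top ::ₘ Δ) A
  | fact (A A' : LOFact σ) : A + A' ∈ I → Sat I (A.map Goal.atom) A'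
  | par (G₁ G₂ : Goal σ) (Δ : Ctx σ) (A : LOFact σ) :
      Sat I (G₁ ::ₘ G₂ ::ₘ Δ) A → Sat I (Goal.par G₁ G₂ ::ₘ Δ) A
  | wth (G₁ G₂ : Goal σ) (Δ : Ctx σ) (A : LOFact σ) :
      Sat I (G₁ ::ₘ Δ) A → Sat I (G₂ ::ₘ Δ) A → Sat I (Goal.wth G₁ G₂ ::ₘ Δ) A

/-- The immediate-consequence operator `T_P`. -/
def TP (P : LOProgram σ) (I : Set (LOFact σ)) : Set (LOFact σ) :=
  { M | ∃ H G A, (H, G) ∈ P ∧ Sat I ({G} : Ctx σ) A ∧ M = H + A }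

/-!
The denotation map `den` intertwines the two operators, `den (S_P I) = T_P (den I)`, because the
facts derived by `⊩` from `I` generate, under upward closure, those satisfying `⊨` in `den I`:
`B ∖ A` is the least fact `A'` with `B ≼ A + A'`, and `A₁ ⊔ A₂` is the least fact above both `A₁`
and `A₂`. As `den` also preserves unions, it carries `S_P↑ω` to `⋃ₖ T_P^k(∅)`. A derivation of `⊨`
consults `I` only finitely often, so `T_P` is Scott continuous, and Kleene's theorem identifies that
union with the least fixpoint of `T_P`.
-/

section

variable {τ : Type}

theorem den_eq_upperClosure (I : Set (LOFact τ)) : den I = upperClosure I :=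
  rfl

theorem den_empty : den (∅ : Set (LOFact τ)) = ∅ := by
  rw [den_eq_upperClosure, upperClosure_empty, UpperSet.coe_top]

theorem den_iUnion {ι : Sort*} (I : ι → Set (LOFact τ)) : den (⋃ i, I i) = ⋃ i, den (I i) := by
  simp only [den_eq_upperClosure, upperClosure_iUnion, UpperSet.coe_iInf]

theorem Sat.mono {I J : Set (LOFact τ)} {Δ : Ctx τ} {A : LOFact τ} (hIJ : I ⊆ J)
    (h : Sat I Δ A) : Sat J Δ A := by
  induction h with
  | top Δ A => exact .top Δ A
  | fact A A' hA => exact .fact A A' (hIJ hA)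
  | par G₁ G₂ Δ A _ ih => exact .par G₁ G₂ Δ A ih
  | wth G₁ G₂ Δ A _ _ ih₁ ih₂ => exact .wth G₁ G₂ Δ A ih₁ ih₂

theorem Sat.exists_mem_of_sUnion {𝒟 : Set (Set (LOFact τ))} {Δ : Ctx τ} {A : LOFact τ}
    (hne : 𝒟.Nonempty) (hdir : DirectedOn (· ⊆ ·) 𝒟) (h : Sat (⋃₀ 𝒟) Δ A) :
    ∃ I ∈ 𝒟, Sat I Δ A := by
  induction h with
  | top Δ A =>
    obtain ⟨I, hI⟩ := hne
    exact ⟨I, hI, .top Δ A⟩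
  | fact A A' hA =>
    obtain ⟨I, hI, hAI⟩ := hA
    exact ⟨I, hI, .fact A A' hAI⟩
  | par G₁ G₂ Δ A _ ih =>
    obtain ⟨I, hI, h⟩ := ih
    exact ⟨I, hI, .par G₁ G₂ Δ A h⟩
  | wth G₁ G₂ Δ A _ _ ih₁ ih₂ =>
    obtain ⟨I₁, hI₁, h₁⟩ := ih₁
    obtain ⟨I₂, hI₂, h₂⟩ := ih₂
    obtain ⟨J, hJ, hI₁J, hI₂J⟩ := hdir I₁ hI₁ I₂ hI₂
    exact ⟨J, hJ, .wth G₁ G₂ Δ A (h₁.mono hI₁J) (h₂.mono hI₂J)⟩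

theorem monotone_TP (P : LOProgram τ) : Monotone (TP P) := by
  rintro I J hIJ _ ⟨H, G, A, hHG, hA, rfl⟩
  exact ⟨H, G, A, hHG, hA.mono hIJ, rfl⟩

theorem scottContinuous_TP (P : LOProgram τ) : ScottContinuous (TP P) := by
  rw [scottContinuous_iff_map_sSup]
  intro 𝒟 hne hdir
  refine subset_antisymm ?_ (sSup_image.trans_le (monotone_TP P).le_map_sSup)
  rintro _ ⟨H, G, A, hHG, hA, rfl⟩
  obtain ⟨I, hI, hIA⟩ := hA.exists_mem_of_sUnion hne hdir
  exact ⟨TP P I, Set.mem_image_of_mem _ hI, H, G, A, hHG, hIA, rfl⟩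

theorem isLeast_iUnion_iterate_TP (P : LOProgram τ) :
    IsLeast {I : Set (LOFact τ) | TP P I = I} (⋃ k, (TP P)^[k] ∅) := by
  let T : Set (LOFact τ) →o Set (LOFact τ) := ⟨TP P, monotone_TP P⟩
  have kleene : T.lfp = ⋃ k, (TP P)^[k] ∅ :=
    fixedPoints.lfp_eq_sSup_iterate T (scottContinuous_TP P).ωScottContinuous
  exact kleene ▸ T.isLeast_lfp

variable [DecidableEq τ]

theorem SSat.sat_den {I : Set (LOFact τ)} {Δ : Ctx τ} {A B : LOFact τ} (h : SSat I Δ A)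
    (hAB : A ≤ B) : Sat (den I) Δ B := by
  induction h with
  | top Δ => exact .top Δ B
  | fact A C hC => exact .fact A B ⟨C, hC, tsub_le_iff_left.mp hAB⟩
  | par G₁ G₂ Δ A _ ih => exact .par G₁ G₂ Δ B (ih hAB)
  | wth G₁ G₂ Δ A₁ A₂ _ _ ih₁ ih₂ =>
    obtain ⟨hA₁, hA₂⟩ := Multiset.union_le_iff.mp hAB
    exact .wth G₁ G₂ Δ B (ih₁ hA₁) (ih₂ hA₂)

theorem Sat.exists_le_sSat {I : Set (LOFact τ)} {Δ : Ctx τ} {B : LOFact τ}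
    (h : Sat (den I) Δ B) : ∃ A ≤ B, SSat I Δ A := by
  induction h with
  | top Δ B => exact ⟨0, B.zero_le, .top Δ⟩
  | fact A B hAB =>
    obtain ⟨C, hC, hCAB⟩ := hAB
    exact ⟨C - A, tsub_le_iff_left.mpr hCAB, .fact A C hC⟩
  | par G₁ G₂ Δ B _ ih =>
    obtain ⟨A, hAB, hA⟩ := ih
    exact ⟨A, hAB, .par G₁ G₂ Δ A hA⟩
  | wth G₁ G₂ Δ B _ _ ih₁ ih₂ =>
    obtain ⟨A₁, hA₁B, hA₁⟩ := ih₁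
    obtain ⟨A₂, hA₂B, hA₂⟩ := ih₂
    exact ⟨A₁ ∪ A₂, Multiset.union_le hA₁B hA₂B, .wth G₁ G₂ Δ A₁ A₂ hA₁ hA₂⟩

theorem sat_den_iff {I : Set (LOFact τ)} {Δ : Ctx τ} {B : LOFact τ} :
    Sat (den I) Δ B ↔ ∃ A ≤ B, SSat I Δ A :=
  ⟨Sat.exists_le_sSat, fun ⟨_, hAB, hA⟩ ↦ hA.sat_den hAB⟩

theorem den_SP (P : LOProgram τ) (I : Set (LOFact τ)) : den (SP P I) = TP P (den I) := by
  ext M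
  constructor
  · rintro ⟨_, ⟨H, G, A, hHG, hA, rfl⟩, hM⟩
    obtain ⟨C, rfl⟩ := Multiset.le_iff_exists_add.mp hM
    exact ⟨H, G, A + C, hHG, sat_den_iff.mpr ⟨A, Multiset.le_add_right A C, hA⟩, add_assoc H A C⟩
  · rintro ⟨H, G, B, hHG, hB, rfl⟩
    obtain ⟨A, hAB, hA⟩ := sat_den_iff.mp hB
    exact ⟨H + A, ⟨H, G, A, hHG, hA, rfl⟩, add_le_add_right hAB H⟩

theorem den_iterate_SP (P : LOProgram τ) (k : ℕ) : den ((SP P)^[k] ∅) = (TP P)^[k] ∅ := by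
  have h : Function.Semiconj den (SP P) (TP P) := den_SP P
  rw [(h.iterate_right k).eq, den_empty]

theorem den_lfp_SP_eq_lfp_TP_general (P : LOProgram τ) :
    IsLeast { I : Set (LOFact τ) | TP P I = I } (den (⋃ k, (SP P)^[k] ∅)) := by
  simpa only [den_iUnion, den_iterate_SP] using isLeast_iUnion_iterate_TP P

end

/-- The denotation of the least fixpoint of the symbolic operator `S_P`
(obtained as the union of its iterates from `∅`) is the least fixpoint of `T_P`. -/
theorem den_lfp_SP_eq_lfp_TP (P : LOProgram σ) :
    IsLeast { I : Set (LOFact σ) | TP P I = I } (den (⋃ k, (SP P)^[k] ∅)) :=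
  den_lfp_SP_eq_lfp_TP_general P
end
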